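/- arXiv:2010.14938 — 2 statements merged into one kernel-verified Lean document; each statement's English description precedes it below -/
import Mathlib

section
/- Let w ∈ L¹(ℝ) ∩ L²(ℝ) and let 𝓔 : ℝ → ℝ be twice continuously differentiable with 𝓔, 𝓔′, 𝓔″ bounded. Assume there exists a constant C > 0 such that ‖Rh‖_{L⁴(Ω_S)} ≤ C·‖h‖_{L²(Ω_D)} for all h ∈ L²(Ω_D). Then the operator F : L²(Ω_D) → L²(Ω_S) is Fréchet differentiable at every f ∈ L²(Ω_D), with derivative given by the bounded linear operator (F′(f)h)(s,θ) := ½·∫_ℝ w(r−s)·𝓔′(½·(Rf)(r,θ))·(Rh)(r,θ) dr; in particular, ‖F(f+h) − F(f) − F′(f)h‖_{L²(Ω_S)} ≤ ¼·‖w‖_{L²(ℝ)}·‖𝓔″‖_{L^∞(ℝ)}·C²·‖h‖²_{L²(Ω_D)} for all h ∈ L²(Ω_D). -/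
/-!
The operator `F` applies `𝓔` pointwise to the half sinogram `½ Rf` and correlates with `w` in the
first variable. By Cauchy–Schwarz in `r`, correlation with `w ∈ L²` maps `L²` of the strip
`[-1,1] × [0,2π)` to itself with norm at most `2 ‖w‖₂`; the integral over all of `ℝ` does not
matter, because sinograms of functions on the disk vanish off the strip. The remainder
`F(f + h) - F(f) - F'(f)h` is the correlation of `w` with the pointwise Taylor remainder of `𝓔`,
which is at most `½ ‖𝓔''‖_∞ |½ Rh|²`; its `L²` norm is thus controlled by `‖Rh‖₄²`, and this is
where the `L² → L⁴` bound on `R` enters. The same bound with Hölder's inequality `4, 4 → 2` gives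
boundedness of `F'(f)`, since `𝓔'` is Lipschitz and hence `𝓔'(½ Rf) ∈ L⁴`.
-/

open MeasureTheory Real Set

/-- The Radon transform of `f : ℝ² → ℝ`:
`(Rf)(s,θ) = ∫_ℝ f(s·u(θ) + σ·u(θ)^⊥) dσ` with `u(θ) = (cos θ, sin θ)`,
`u(θ)^⊥ = (-sin θ, cos θ)`. -/
noncomputable def radonT (f : ℝ × ℝ → ℝ) (s θ : ℝ) : ℝ :=
  ∫ σ : ℝ, f (s * Real.cos θ - σ * Real.sin θ, s * Real.sin θ + σ * Real.cos θ)

/-- The closed unit disk `Ω_D ⊆ ℝ²`. -/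
def unitDisk : Set (ℝ × ℝ) := {x : ℝ × ℝ | x.1 ^ 2 + x.2 ^ 2 ≤ 1}

/-- The sinogram domain `Ω_S = [-1,1] × [0,2π)`. -/
def sinoDom : Set (ℝ × ℝ) := Icc (-1 : ℝ) 1 ×ˢ Ico (0 : ℝ) (2 * π)

/-- The forward operator `F(f)(s,θ) = ∫_ℝ w(r-s) · 𝓔(½ (Rf)(r,θ)) dr`. -/
noncomputable def Fop (w E : ℝ → ℝ) (f : ℝ × ℝ → ℝ) (s θ : ℝ) : ℝ :=
  ∫ r : ℝ, w (r - s) * E ((1 / 2) * radonT f r θ)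

/-- The derivative operator
`(A(f)h)(s,θ) = ½ ∫_ℝ w(r-s) · 𝓔'(½ (Rf)(r,θ)) · (Rh)(r,θ) dr`. -/
noncomputable def Aop (w E' : ℝ → ℝ) (f h : ℝ × ℝ → ℝ) (s θ : ℝ) : ℝ :=
  (1 / 2) * ∫ r : ℝ, w (r - s) * E' ((1 / 2) * radonT f r θ) * radonT h r θ

open scoped ENNReal

theorem enorm_le_eLpNorm_top_of_continuous {X E : Type*} [TopologicalSpace X] [MeasurableSpace X]
    [NormedAddCommGroup E] {μ : Measure X} [μ.IsOpenPosMeasure] {f : X → E} (hf : Continuous f)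
    (x : X) : ‖f x‖ₑ ≤ eLpNorm f ∞ μ := by
  have h_dense : Dense {y | ‖f y‖ₑ ≤ eLpNorm f ∞ μ} :=
    μ.dense_of_ae (by simpa only [eLpNorm_exponent_top] using ae_le_eLpNormEssSup)
  have h_closed : IsClosed {y | ‖f y‖ₑ ≤ eLpNorm f ∞ μ} :=
    isClosed_le hf.enorm continuous_const
  exact h_closed.closure_subset (h_dense x)

theorem memLp_comp_of_lipschitzWith {α E F : Type*} [MeasurableSpace α] [NormedAddCommGroup E]
    [NormedAddCommGroup F] {μ : Measure α} [IsFiniteMeasure μ] {K : NNReal} {p : ℝ≥0∞} {f : E → F}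
    {u : α → E} (hf : LipschitzWith K f) (hu : MemLp u p μ) : MemLp (f ∘ u) p μ := by
  have h_sub : LipschitzWith K (fun x => f x - f 0) := by
    simpa using hf.sub (LipschitzWith.const (f 0))
  convert (h_sub.comp_memLp (sub_self _) hu).add (memLp_const (f 0)) using 1
  ext; simp

theorem integrable_of_memLp_of_support_subset {α E : Type*} [MeasurableSpace α]
    [NormedAddCommGroup E] {μ : Measure α} {p : ℝ≥0∞} {f : α → E} {s : Set α} (hf : MemLp f p μ)
    (hp : 1 ≤ p) (hs : μ s ≠ ∞) (hfs : Function.support f ⊆ s) : Integrable f μ := by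
  have : IsFiniteMeasure (μ.restrict s) := isFiniteMeasure_restrict.2 hs
  exact (integrableOn_iff_integrable_of_support_subset hfs).1 ((hf.restrict s).integrable hp)

theorem memLp_of_restrict_of_support_subset {α E : Type*} [MeasurableSpace α]
    [NormedAddCommGroup E] {μ : Measure α} {p : ℝ≥0∞} {f : α → E} {s : Set α} (hs : MeasurableSet s)
    (hf : MemLp f p (μ.restrict s)) (hfs : Function.support f ⊆ s) : MemLp f p μ := by
  rwa [← memLp_indicator_iff_restrict hs, indicator_eq_self.2 hfs] at hf

theorem eLpNorm_restrict_of_support_subset {α E : Type*} [MeasurableSpace α]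
    [NormedAddCommGroup E] {μ : Measure α} {p : ℝ≥0∞} {f : α → E} {s : Set α}
    (hs : MeasurableSet s) (hfs : Function.support f ⊆ s) :
    eLpNorm f p (μ.restrict s) = eLpNorm f p μ := by
  rw [← eLpNorm_indicator_eq_eLpNorm_restrict hs, indicator_eq_self.2 hfs]

section Correlation

variable {G β 𝕜 : Type*} [AddGroup G] [MeasurableSpace G] [MeasurableSpace β] [RCLike 𝕜]
  {μ : Measure G} {ν : Measure β} {w : G → 𝕜} {g : G × β → 𝕜}

/-- The cross-correlation of `w` with `g` in the first variable of `g`, the second variable being a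
parameter. -/
noncomputable def correlation (μ : Measure G) (w : G → 𝕜) (g : G × β → 𝕜) (p : G × β) : 𝕜 :=
  ∫ r, w (r - p.1) * g (r, p.2) ∂μ

theorem eLpNorm_two_sq_eq_lintegral {α E : Type*} [MeasurableSpace α] [NormedAddCommGroup E]
    (f : α → E) (μ : Measure α) : eLpNorm f 2 μ ^ 2 = ∫⁻ x, ‖f x‖ₑ ^ 2 ∂μ := by
  simpa using eLpNorm_nnreal_pow_eq_lintegral (μ := μ) (f := f) (p := 2) (by norm_num)

theorem enorm_integral_mul_le_eLpNorm_two_mul_eLpNorm_two {α : Type*} [MeasurableSpace α]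
    {μ : Measure α} {f g : α → 𝕜} (hf : AEStronglyMeasurable f μ)
    (hg : AEStronglyMeasurable g μ) :
    ‖∫ x, f x * g x ∂μ‖ₑ ≤ eLpNorm f 2 μ * eLpNorm g 2 μ :=
  calc ‖∫ x, f x * g x ∂μ‖ₑ ≤ ∫⁻ x, ‖f x * g x‖ₑ ∂μ := enorm_integral_le_lintegral_enorm _
    _ = eLpNorm (f • g) 1 μ := eLpNorm_one_eq_lintegral_enorm.symm
    _ ≤ eLpNorm f 2 μ * eLpNorm g 2 μ := eLpNorm_smul_le_mul_eLpNorm hg hf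

variable [MeasurableAdd₂ G] [SFinite μ] [μ.IsAddRightInvariant] [SFinite ν]

theorem aestronglyMeasurable_correlation [MeasurableNeg G] (hw : AEStronglyMeasurable w μ)
    (hg : AEStronglyMeasurable g (μ.prod ν)) :
    AEStronglyMeasurable (correlation μ w g) (μ.prod ν) := by
  have h_shift : Measure.QuasiMeasurePreserving (fun q : (G × β) × G => q.2 - q.1.1)
      ((μ.prod ν).prod μ) μ :=
    QuasiMeasurePreserving.prod_of_right (by fun_prop) <| .of_forall fun p =>
      (measurePreserving_sub_right μ p.1).quasiMeasurePreserving
  have h_param : Measure.QuasiMeasurePreserving (fun q : (G × β) × G => (q.2, q.1.2))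
      ((μ.prod ν).prod μ) (μ.prod ν) :=
    Measure.measurePreserving_swap.quasiMeasurePreserving.comp
      (QuasiMeasurePreserving.prodMap Measure.quasiMeasurePreserving_snd (.id μ))
  exact ((hw.comp_quasiMeasurePreserving h_shift).mul
    (hg.comp_quasiMeasurePreserving h_param)).integral_prod_right'

theorem eLpNorm_correlation_le (hw : AEStronglyMeasurable w μ)
    (hg : AEStronglyMeasurable g (μ.prod ν)) (S : Set G) :
    eLpNorm (correlation μ w g) 2 ((μ.restrict S).prod ν) ≤
      μ S ^ (1 / 2 : ℝ) * eLpNorm w 2 μ * eLpNorm g 2 (μ.prod ν) := by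
  have h_pointwise : ∀ᵐ p ∂(μ.restrict S).prod ν,
      ‖correlation μ w g p‖ₑ ≤ eLpNorm w 2 μ * eLpNorm (fun r => g (r, p.2)) 2 μ := by
    filter_upwards [Measure.quasiMeasurePreserving_snd.ae hg.prodMk_right] with p hp
    have h_shift := measurePreserving_sub_right μ p.1
    rw [← eLpNorm_comp_measurePreserving hw h_shift]
    exact enorm_integral_mul_le_eLpNorm_two_mul_eLpNorm_two
      (hw.comp_measurePreserving h_shift) hp
  refine (ENNReal.pow_le_pow_left_iff two_ne_zero).1 ?_
  calc eLpNorm (correlation μ w g) 2 ((μ.restrict S).prod ν) ^ 2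
      = ∫⁻ p, ‖correlation μ w g p‖ₑ ^ 2 ∂(μ.restrict S).prod ν :=
        eLpNorm_two_sq_eq_lintegral _ _
    _ ≤ ∫⁻ p, eLpNorm w 2 μ ^ 2 * ∫⁻ r, ‖g (r, p.2)‖ₑ ^ 2 ∂μ ∂(μ.restrict S).prod ν := by
        refine lintegral_mono_ae (h_pointwise.mono fun p hp => ?_)
        rw [← eLpNorm_two_sq_eq_lintegral, ← mul_pow]
        gcongr
    _ = μ S * (eLpNorm w 2 μ ^ 2 * ∫⁻ θ, ∫⁻ r, ‖g (r, θ)‖ₑ ^ 2 ∂μ ∂ν) := by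
        have h_section : AEMeasurable (fun θ => ∫⁻ r, ‖g (r, θ)‖ₑ ^ 2 ∂μ) ν :=
          (hg.enorm.pow_const 2).lintegral_prod_left'
        rw [lintegral_prod_mul (f := fun _ => eLpNorm w 2 μ ^ 2) aemeasurable_const h_section,
          lintegral_const, Measure.restrict_apply_univ, mul_right_comm, mul_comm, mul_comm (μ S)]
    _ = (μ S ^ (1 / 2 : ℝ) * eLpNorm w 2 μ * eLpNorm g 2 (μ.prod ν)) ^ 2 := by
        have h_sqrt : (μ S ^ (1 / 2 : ℝ)) ^ 2 = μ S := by
          rw [← ENNReal.rpow_mul_natCast]; norm_num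
        rw [← lintegral_prod_symm _ (hg.enorm.pow_const 2), ← eLpNorm_two_sq_eq_lintegral,
          mul_pow, mul_pow, h_sqrt, mul_assoc]

theorem ae_integrable_mul_of_memLp_two {ρ : Measure G} [SFinite ρ] (hw : MemLp w 2 μ)
    (hg : MemLp g 2 (μ.prod ν)) :
    ∀ᵐ p ∂ρ.prod ν, Integrable (fun r => w (r - p.1) * g (r, p.2)) μ := by
  have h_section : ∀ᵐ θ ∂ν, MemLp (fun r => g (r, θ)) 2 μ := by
    have h_sq : Integrable (fun q => ‖g q‖ ^ (2 : ℝ≥0∞).toReal) (μ.prod ν) :=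
      (integrable_norm_rpow_iff hg.1 two_ne_zero ENNReal.ofNat_ne_top).2 hg
    filter_upwards [hg.aestronglyMeasurable.prodMk_right, h_sq.prod_left_ae] with θ h_meas h_sqθ
    exact (integrable_norm_rpow_iff h_meas two_ne_zero ENNReal.ofNat_ne_top).1 h_sqθ
  filter_upwards [Measure.quasiMeasurePreserving_snd.ae h_section] with p hp
  exact (hw.comp_measurePreserving (measurePreserving_sub_right μ p.1)).integrable_mul hp

end Correlation

section Taylor
variable {E : ℝ → ℝ}
/-- The first-order Taylor remainder of `E` at `x` with increment `y`. -/
noncomputable def taylorRemainder (E : ℝ → ℝ) (x y : ℝ) : ℝ :=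
  E (x + y) - E x - deriv E x * y

theorem support_taylorRemainder_subset {α : Type*} (E : ℝ → ℝ) (a b : α → ℝ) :
    Function.support (fun x => taylorRemainder E (a x) (b x)) ⊆ Function.support b :=
  Function.support_subset_iff'.2 fun x hx => by
    simp [taylorRemainder, Function.notMem_support.1 hx]

theorem exists_taylorRemainder_eq (hE : ContDiff ℝ 2 E) (x y : ℝ) :
    ∃ ξ, taylorRemainder E x y = 1 / 2 * (deriv (deriv E) ξ * y ^ 2) := by
  obtain rfl | hy := eq_or_ne y 0
  · exact ⟨x, by simp [taylorRemainder]⟩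
  have hxy : x ≠ x + y := by simpa using hy
  obtain ⟨ξ, -, hξ⟩ := taylor_mean_remainder_lagrange_iteratedDeriv (n := 1) hxy
    (hE.contDiffOn.of_le (by norm_num))
  refine ⟨ξ, ?_⟩
  have h_deriv : derivWithin E (uIcc x (x + y)) x = deriv E x :=
    ((hE.differentiable two_ne_zero) x).derivWithin (uniqueDiffOn_uIcc hxy x left_mem_uIcc)
  have h_poly : taylorWithinEval E 1 (uIcc x (x + y)) x (x + y) = E x + y * deriv E x := by
    simp [taylorWithinEval_succ, iteratedDerivWithin_one, h_deriv]
  have h_two : (((1 + 1 : ℕ).factorial : ℕ) : ℝ) = 2 := by norm_num [Nat.factorial]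
  rw [h_poly, h_two, iteratedDeriv_succ, iteratedDeriv_one, add_sub_cancel_left, one_add_one_eq_two]
    at hξ
  rw [taylorRemainder]
  linarith

theorem enorm_taylorRemainder_le (hE : ContDiff ℝ 2 E) (x y : ℝ) :
    ‖taylorRemainder E x y‖ₑ ≤
      ENNReal.ofReal (1 / 2) * eLpNorm (deriv (deriv E)) ∞ volume * ‖y‖ₑ ^ 2 := by
  have h_cont : Continuous (deriv (deriv E)) := by
    simpa [iteratedDeriv_succ] using hE.continuous_iteratedDeriv 2 le_rfl
  obtain ⟨ξ, hξ⟩ := exists_taylorRemainder_eq hE x y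
  rw [hξ, enorm_mul, enorm_mul, enorm_pow, ← mul_assoc, Real.enorm_of_nonneg (by norm_num)]
  gcongr
  exact enorm_le_eLpNorm_top_of_continuous h_cont ξ

theorem lipschitzWith_deriv_of_contDiff_two (hE : ContDiff ℝ 2 E)
    (hE₂ : MemLp (deriv (deriv E)) ∞) :
    LipschitzWith (eLpNorm (deriv (deriv E)) ∞ volume).toNNReal (deriv E) := by
  have h_diff : ContDiff ℝ 1 (deriv E) := (contDiff_succ_iff_deriv.1 hE).2.2
  refine lipschitzWith_of_nnnorm_deriv_le (h_diff.differentiable one_ne_zero) fun x => ?_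
  rw [← ENNReal.coe_le_coe, ENNReal.coe_toNNReal hE₂.eLpNorm_ne_top]
  exact enorm_le_eLpNorm_top_of_continuous (h_diff.continuous_deriv le_rfl) x

variable {α : Type*} [MeasurableSpace α] {μ : Measure α} {a b : α → ℝ} {p : ℝ≥0∞}

theorem eLpNorm_taylorRemainder_le (hE : ContDiff ℝ 2 E) (hb : AEStronglyMeasurable b μ)
    (a : α → ℝ) (p : ℝ≥0∞) :
    eLpNorm (fun x => taylorRemainder E (a x) (b x)) p μ ≤
      ENNReal.ofReal (1 / 2) * eLpNorm (deriv (deriv E)) ∞ volume * eLpNorm b (p * 2) μ ^ 2 := by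
  have h_pow := eLpNorm_norm_rpow (p := p) (μ := μ) b zero_lt_two
  simp only [ENNReal.ofReal_ofNat, ENNReal.rpow_ofNat, Real.rpow_ofNat] at h_pow
  rw [← h_pow]
  refine eLpNorm_le_mul_eLpNorm_of_ae_le_mul'' p (hb.norm.pow 2) (.of_forall fun x => ?_)
  simpa using enorm_taylorRemainder_le hE (a x) (b x)

theorem memLp_taylorRemainder (hE : ContDiff ℝ 2 E) (hE₂ : MemLp (deriv (deriv E)) ∞)
    (ha : AEStronglyMeasurable a μ) (hb : MemLp b (p * 2) μ) :
    MemLp (fun x => taylorRemainder E (a x) (b x)) p μ := by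
  refine ⟨?_, (eLpNorm_taylorRemainder_le hE hb.1 a p).trans_lt ?_⟩
  · have h_deriv : Continuous (deriv E) := hE.continuous_deriv (by norm_num)
    exact ((hE.continuous.comp_aestronglyMeasurable (ha.add hb.1)).sub
      (hE.continuous.comp_aestronglyMeasurable ha)).sub
      ((h_deriv.comp_aestronglyMeasurable ha).mul hb.1)
  · exact ENNReal.mul_lt_top (ENNReal.mul_lt_top ENNReal.ofReal_lt_top hE₂.2)
      (ENNReal.pow_lt_top hb.2)

theorem memLp_comp_of_contDiff_two [IsFiniteMeasure μ] (hE : ContDiff ℝ 2 E)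
    (hE₂ : MemLp (deriv (deriv E)) ∞) (ha : MemLp a (p * 2) μ) : MemLp (fun x => E (a x)) p μ := by
  have h_expand (x : α) : E (a x) = taylorRemainder E 0 (a x) + (E 0 + deriv E 0 * a x) := by
    simp only [taylorRemainder, zero_add]
    ring
  have ha₁ : MemLp a p μ := ha.mono_exponent (le_mul_of_one_le_right' one_le_two)
  have h_rem : MemLp (fun x => taylorRemainder E 0 (a x)) p μ :=
    memLp_taylorRemainder (a := fun _ => 0) hE hE₂ aestronglyMeasurable_const ha
  simp only [h_expand]
  exact h_rem.add ((memLp_const (E 0)).add (ha₁.const_mul (deriv E 0)))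

end Taylor

/-- The rotation of `ℝ²` by the angle `θ`, taking the coordinates `(s, σ)` along `u(θ)` and
`u(θ)^⊥` to the point `s • u(θ) + σ • u(θ)^⊥`. -/
noncomputable def rotate (θ : ℝ) (q : ℝ × ℝ) : ℝ × ℝ :=
  (q.1 * cos θ - q.2 * sin θ, q.1 * sin θ + q.2 * cos θ)

theorem measurePreserving_rotate (θ : ℝ) : MeasurePreserving (rotate θ) := by
  have h_complex : rotate θ = Complex.measurableEquivRealProd ∘ rotation (Circle.exp θ) ∘
      Complex.measurableEquivRealProd.symm := by
    ext q <;>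
      simp [rotate, Complex.measurableEquivRealProd, Complex.exp_ofReal_mul_I_re,
        Complex.exp_ofReal_mul_I_im, rotation_apply] <;>
      ring
  rw [h_complex]
  exact Complex.volume_preserving_equiv_real_prod.comp <|
    (rotation (Circle.exp θ)).measurePreserving.comp
      Complex.volume_preserving_equiv_real_prod.symm

theorem quasiMeasurePreserving_uncurry_rotate :
    Measure.QuasiMeasurePreserving (fun q : ℝ × ℝ × ℝ => rotate q.1 q.2) :=
  QuasiMeasurePreserving.prod_of_right (by unfold rotate; fun_prop) <|
    .of_forall fun θ => (measurePreserving_rotate θ).quasiMeasurePreserving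

/-- The sinogram of `f`: its Radon transform as a function on `ℝ × ℝ ⊇ Ω_S`. -/
noncomputable def sinogram (f : ℝ × ℝ → ℝ) (p : ℝ × ℝ) : ℝ := radonT f p.1 p.2

theorem aestronglyMeasurable_sinogram {f : ℝ × ℝ → ℝ} (hf : AEStronglyMeasurable f) :
    AEStronglyMeasurable (sinogram f) := by
  have h_lines : AEStronglyMeasurable (fun q : (ℝ × ℝ) × ℝ => f (rotate q.1.1 (q.1.2, q.2))) :=
    (hf.comp_quasiMeasurePreserving quasiMeasurePreserving_uncurry_rotate).comp_measurePreserving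
      (measurePreserving_prodAssoc volume volume volume)
  exact h_lines.integral_prod_right'.prod_swap

theorem radonT_const_smul (c : ℝ) (f : ℝ × ℝ → ℝ) (s θ : ℝ) :
    radonT (c • f) s θ = c * radonT f s θ :=
  integral_const_mul c _

theorem radonT_add_ae {f g : ℝ × ℝ → ℝ} (hf : Integrable f) (hg : Integrable g) (θ : ℝ) :
    ∀ᵐ s, radonT (f + g) s θ = radonT f s θ + radonT g s θ := by
  have h_lines {u : ℝ × ℝ → ℝ} (hu : Integrable u) :
      ∀ᵐ s, Integrable fun σ => u (rotate θ (s, σ)) :=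
    ((measurePreserving_rotate θ).integrable_comp_of_integrable hu).prod_right_ae
  filter_upwards [h_lines hf, h_lines hg] with s hfs hgs
  exact integral_add hfs hgs

theorem abs_le_one_of_rotate_mem_unitDisk {θ : ℝ} {q : ℝ × ℝ} (hq : rotate θ q ∈ unitDisk) :
    |q.1| ≤ 1 := by
  have h_norm : (rotate θ q).1 ^ 2 + (rotate θ q).2 ^ 2 = q.1 ^ 2 + q.2 ^ 2 := by
    simp only [rotate]
    linear_combination (q.1 ^ 2 + q.2 ^ 2) * sin_sq_add_cos_sq θ
  have h_le : q.1 ^ 2 + q.2 ^ 2 ≤ 1 := h_norm ▸ hq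
  exact (sq_le_one_iff_abs_le_one q.1).1 (by linarith [sq_nonneg q.2])

theorem support_sinogram_subset {f : ℝ × ℝ → ℝ} (hf : Function.support f ⊆ unitDisk) :
    Function.support (sinogram f) ⊆ Icc (-1) 1 ×ˢ univ := by
  rintro ⟨s, θ⟩ hp
  obtain ⟨σ, hσ⟩ : ∃ σ, f (rotate θ (s, σ)) ≠ 0 := by
    by_contra! h_zero
    exact hp (integral_eq_zero_of_ae (.of_forall h_zero))
  exact ⟨abs_le.1 (abs_le_one_of_rotate_mem_unitDisk (q := (s, σ)) (hf hσ)), mem_univ θ⟩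

theorem volume_unitDisk_lt_top : volume unitDisk < ∞ := by
  have h_subset : unitDisk ⊆ Icc (-1) 1 := by
    rintro ⟨x, y⟩ (h : x ^ 2 + y ^ 2 ≤ 1)
    have hx : |x| ≤ 1 := (sq_le_one_iff_abs_le_one x).1 (by linarith [sq_nonneg y])
    have hy : |y| ≤ 1 := (sq_le_one_iff_abs_le_one y).1 (by linarith [sq_nonneg x])
    exact ⟨⟨(abs_le.1 hx).1, (abs_le.1 hy).1⟩, ⟨(abs_le.1 hx).2, (abs_le.1 hy).2⟩⟩
  exact (measure_mono h_subset).trans_lt isCompact_Icc.measure_lt_top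

theorem integrable_of_support_subset_unitDisk {f : ℝ × ℝ → ℝ} (hf : MemLp f 2)
    (hfD : Function.support f ⊆ unitDisk) : Integrable f :=
  integrable_of_memLp_of_support_subset hf one_le_two volume_unitDisk_lt_top.ne hfD

theorem restrict_sinoDom :
    volume.restrict sinoDom =
      (volume.restrict (Icc (-1) 1)).prod (volume.restrict (Ico 0 (2 * π))) :=
  (Measure.prod_restrict _ _).symm

theorem restrict_sinoDom_eq_restrict_strip :
    volume.restrict sinoDom =
      ((volume : Measure ℝ).prod (volume.restrict (Ico 0 (2 * π)))).restrict
        (Icc (-1) 1 ×ˢ univ) :=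
  restrict_sinoDom.trans (Measure.restrict_prod_eq_prod_univ _)

instance isFiniteMeasure_restrict_sinoDom :
    IsFiniteMeasure ((volume : Measure (ℝ × ℝ)).restrict sinoDom) := by
  rw [restrict_sinoDom]
  infer_instance

section Strip

variable {w : ℝ → ℝ} {g : ℝ × ℝ → ℝ}

theorem memLp_strip_of_support_subset {p : ℝ≥0∞} (hg : MemLp g p (volume.restrict sinoDom))
    (hgS : Function.support g ⊆ Icc (-1) 1 ×ˢ univ) :
    MemLp g p ((volume : Measure ℝ).prod (volume.restrict (Ico 0 (2 * π)))) :=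
  memLp_of_restrict_of_support_subset (measurableSet_Icc.prod .univ)
    (restrict_sinoDom_eq_restrict_strip ▸ hg) hgS

theorem eLpNorm_correlation_sinoDom_le (hw : AEStronglyMeasurable w)
    (hg : MemLp g 2 (volume.restrict sinoDom))
    (hgS : Function.support g ⊆ Icc (-1) 1 ×ˢ univ) :
    eLpNorm (correlation volume w g) 2 (volume.restrict sinoDom) ≤
      2 * eLpNorm w 2 volume * eLpNorm g 2 (volume.restrict sinoDom) := by
  have h_length : volume (Icc (-1 : ℝ) 1) ^ (1 / 2 : ℝ) ≤ 2 := by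
    rw [Real.volume_Icc, sub_neg_eq_add, one_add_one_eq_two, ENNReal.ofReal_ofNat]
    exact (ENNReal.rpow_le_rpow_of_exponent_le one_le_two (by norm_num)).trans_eq
      (ENNReal.rpow_one 2)
  have h_norm : eLpNorm g 2 (volume.restrict sinoDom) =
      eLpNorm g 2 ((volume : Measure ℝ).prod (volume.restrict (Ico 0 (2 * π)))) := by
    rw [restrict_sinoDom_eq_restrict_strip,
      eLpNorm_restrict_of_support_subset (measurableSet_Icc.prod .univ) hgS]
  rw [h_norm, restrict_sinoDom]
  refine (eLpNorm_correlation_le hw (memLp_strip_of_support_subset hg hgS).1 _).trans ?_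
  gcongr

theorem memLp_correlation_sinoDom (hw : MemLp w 2) (hg : MemLp g 2 (volume.restrict sinoDom))
    (hgS : Function.support g ⊆ Icc (-1) 1 ×ˢ univ) :
    MemLp (correlation volume w g) 2 (volume.restrict sinoDom) := by
  refine ⟨?_, (eLpNorm_correlation_sinoDom_le hw.1 hg hgS).trans_lt ?_⟩
  · rw [restrict_sinoDom_eq_restrict_strip]
    exact (aestronglyMeasurable_correlation hw.1 (memLp_strip_of_support_subset hg hgS).1).restrict
  · exact ENNReal.mul_lt_top (ENNReal.mul_lt_top ENNReal.ofNat_lt_top hw.2) hg.2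

theorem ae_integrable_mul_sinoDom (hw : MemLp w 2) (hg : MemLp g 2 (volume.restrict sinoDom))
    (hgS : Function.support g ⊆ Icc (-1) 1 ×ˢ univ) :
    ∀ᵐ p ∂volume.restrict sinoDom, Integrable fun r => w (r - p.1) * g (r, p.2) := by
  rw [restrict_sinoDom]
  exact ae_integrable_mul_of_memLp_two hw (memLp_strip_of_support_subset hg hgS)

end Strip

section ForwardOperator

variable {w E : ℝ → ℝ} {f h h₁ h₂ : ℝ × ℝ → ℝ}

theorem memLp_sinogram_of_eLpNorm_le {p : ℝ≥0∞} {C : ℝ} (hh : MemLp h 2)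
    (hR : eLpNorm (sinogram h) p (volume.restrict sinoDom) ≤
      ENNReal.ofReal C * eLpNorm h 2 volume) :
    MemLp (sinogram h) p (volume.restrict sinoDom) :=
  ⟨(aestronglyMeasurable_sinogram hh.1).restrict,
    hR.trans_lt (ENNReal.mul_lt_top ENNReal.ofReal_lt_top hh.2)⟩

instance holderTriple_four_four_two : ENNReal.HolderTriple 4 4 2 where
  inv_add_inv_eq_inv := by
    have h_four : (4 : ℝ≥0∞)⁻¹ = 2⁻¹ / 2 := by
      rw [div_eq_mul_inv, ← ENNReal.mul_inv (by simp) (by simp)]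
      norm_num
    rw [h_four, ENNReal.add_halves]

theorem support_mul_sinogram_subset (g : ℝ × ℝ → ℝ) (hh : Function.support h ⊆ unitDisk) :
    Function.support (fun q => g q * sinogram h q) ⊆ Icc (-1) 1 ×ˢ univ :=
  (Function.support_mul_subset_right g _).trans (support_sinogram_subset hh)

theorem memLp_mul_sinogram {g : ℝ × ℝ → ℝ} (hg : MemLp g 4 (volume.restrict sinoDom))
    (hRh : MemLp (sinogram h) 4 (volume.restrict sinoDom)) :
    MemLp (fun q => g q * sinogram h q) 2 (volume.restrict sinoDom) :=
  hRh.mul hg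

theorem Aop_eq_correlation (w E : ℝ → ℝ) (f h : ℝ × ℝ → ℝ) (p : ℝ × ℝ) :
    Aop w E f h p.1 p.2 =
      1 / 2 * correlation volume w (fun q => E (1 / 2 * sinogram f q) * sinogram h q) p := by
  simp only [Aop, correlation, sinogram, mul_assoc]

theorem Aop_const_smul (w E : ℝ → ℝ) (f : ℝ × ℝ → ℝ) (c : ℝ) (h : ℝ × ℝ → ℝ) (s θ : ℝ) :
    Aop w E f (c • h) s θ = c * Aop w E f h s θ := by
  simp only [Aop, radonT_const_smul, mul_left_comm _ c, integral_const_mul]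

theorem memLp_Aop (hw : MemLp w 2)
    (hEf : MemLp (fun q => E (1 / 2 * sinogram f q)) 4 (volume.restrict sinoDom))
    (hRh : MemLp (sinogram h) 4 (volume.restrict sinoDom)) (hh : Function.support h ⊆ unitDisk) :
    MemLp (fun p : ℝ × ℝ => Aop w E f h p.1 p.2) 2 (volume.restrict sinoDom) := by
  simp only [Aop_eq_correlation]
  exact (memLp_correlation_sinoDom hw (memLp_mul_sinogram hEf hRh)
    (support_mul_sinogram_subset _ hh)).const_mul (1 / 2)

theorem eLpNorm_Aop_le (hw : AEStronglyMeasurable w)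
    (hEf : MemLp (fun q => E (1 / 2 * sinogram f q)) 4 (volume.restrict sinoDom))
    (hRh : MemLp (sinogram h) 4 (volume.restrict sinoDom)) (hh : Function.support h ⊆ unitDisk) :
    eLpNorm (fun p : ℝ × ℝ => Aop w E f h p.1 p.2) 2 (volume.restrict sinoDom) ≤
      eLpNorm w 2 volume *
        eLpNorm (fun q => E (1 / 2 * sinogram f q)) 4 (volume.restrict sinoDom) *
        eLpNorm (sinogram h) 4 (volume.restrict sinoDom) := by
  set g : ℝ × ℝ → ℝ := fun q => E (1 / 2 * sinogram f q) * sinogram h q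
  have h_holder : eLpNorm g 2 (volume.restrict sinoDom) ≤
      eLpNorm (fun q => E (1 / 2 * sinogram f q)) 4 (volume.restrict sinoDom) *
        eLpNorm (sinogram h) 4 (volume.restrict sinoDom) :=
    eLpNorm_smul_le_mul_eLpNorm (𝕜 := ℝ) (E := ℝ) (p := 4) (q := 4) hRh.1 hEf.1
  have h_half : ‖(1 / 2 : ℝ)‖ₑ * 2 = 1 := by
    rw [Real.enorm_of_nonneg (by norm_num), ← ENNReal.ofReal_ofNat 2,
      ← ENNReal.ofReal_mul (by norm_num)]
    norm_num
  calc eLpNorm (fun p : ℝ × ℝ => Aop w E f h p.1 p.2) 2 (volume.restrict sinoDom)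
      = ‖(1 / 2 : ℝ)‖ₑ * eLpNorm (correlation volume w g) 2 (volume.restrict sinoDom) := by
        simp only [Aop_eq_correlation]
        exact eLpNorm_const_smul (1 / 2 : ℝ) (correlation volume w g) _ _
    _ ≤ ‖(1 / 2 : ℝ)‖ₑ *
          (2 * eLpNorm w 2 volume * eLpNorm g 2 (volume.restrict sinoDom)) := by
        gcongr
        exact eLpNorm_correlation_sinoDom_le hw (memLp_mul_sinogram hEf hRh)
          (support_mul_sinogram_subset _ hh)
    _ = eLpNorm w 2 volume * eLpNorm g 2 (volume.restrict sinoDom) := by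
        rw [← mul_assoc, ← mul_assoc, h_half, one_mul]
    _ ≤ _ := by
        rw [mul_assoc]
        gcongr

theorem Aop_add_ae (hw : MemLp w 2)
    (hEf : MemLp (fun q => E (1 / 2 * sinogram f q)) 4 (volume.restrict sinoDom))
    (hRh₁ : MemLp (sinogram h₁) 4 (volume.restrict sinoDom))
    (hRh₂ : MemLp (sinogram h₂) 4 (volume.restrict sinoDom))
    (hh₁_int : Integrable h₁) (hh₂_int : Integrable h₂)
    (hh₁ : Function.support h₁ ⊆ unitDisk) (hh₂ : Function.support h₂ ⊆ unitDisk) :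
    ∀ᵐ p ∂volume.restrict sinoDom,
      Aop w E f (h₁ + h₂) p.1 p.2 = Aop w E f h₁ p.1 p.2 + Aop w E f h₂ p.1 p.2 := by
  filter_upwards [
    ae_integrable_mul_sinoDom hw (memLp_mul_sinogram hEf hRh₁) (support_mul_sinogram_subset _ hh₁),
    ae_integrable_mul_sinoDom hw (memLp_mul_sinogram hEf hRh₂) (support_mul_sinogram_subset _ hh₂)]
    with p h_int₁ h_int₂
  simp only [Aop_eq_correlation, ← mul_add]
  congr 1
  refine Eq.trans (integral_congr_ae ?_) (integral_add h_int₁ h_int₂)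
  filter_upwards [radonT_add_ae hh₁_int hh₂_int p.2] with r hr
  simp only [sinogram, hr, mul_add]

theorem ae_integrable_mul_comp_sinogram (hw₁ : Integrable w) (hw₂ : MemLp w 2)
    (hEf : MemLp (fun q => E (1 / 2 * sinogram f q)) 2 (volume.restrict sinoDom))
    (hf : Function.support f ⊆ unitDisk) :
    ∀ᵐ p ∂volume.restrict sinoDom,
      Integrable fun r => w (r - p.1) * E (1 / 2 * sinogram f (r, p.2)) := by
  -- Only `E(½ Rf) - E 0` vanishes off the strip; the constant `E 0` is integrated using `w ∈ L¹`.
  have h_support : Function.support (fun q => E (1 / 2 * sinogram f q) - E 0) ⊆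
      Icc (-1) 1 ×ˢ univ := by
    refine (Function.support_subset_iff'.2 fun q hq => ?_).trans (support_sinogram_subset hf)
    rw [Function.notMem_support.1 hq, mul_zero, sub_self]
  filter_upwards [ae_integrable_mul_sinoDom hw₂ (hEf.sub (memLp_const (E 0))) h_support] with p hp
  have h_const : Integrable fun r => w (r - p.1) * E 0 := (hw₁.comp_sub_right p.1).mul_const (E 0)
  refine (hp.add h_const).congr (.of_forall fun r => ?_)
  simp only [Pi.add_apply, Pi.sub_apply]
  ring

theorem memLp_deriv_comp_sinogram (hE : ContDiff ℝ 2 E) (hE₂ : MemLp (deriv (deriv E)) ∞)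
    (hRf : MemLp (sinogram f) 4 (volume.restrict sinoDom)) :
    MemLp (fun q => deriv E (1 / 2 * sinogram f q)) 4 (volume.restrict sinoDom) :=
  memLp_comp_of_lipschitzWith (lipschitzWith_deriv_of_contDiff_two hE hE₂) (hRf.const_mul (1 / 2))

/-- The Taylor remainder of `E` on sinograms: the integrand against `w` of the Fréchet remainder
`F(f + h) - F(f) - F'(f)h`. -/
noncomputable def sinogramRemainder (E : ℝ → ℝ) (f h : ℝ × ℝ → ℝ) (q : ℝ × ℝ) : ℝ :=
  taylorRemainder E (1 / 2 * sinogram f q) (1 / 2 * sinogram h q)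

theorem support_sinogramRemainder_subset (E : ℝ → ℝ) (f : ℝ × ℝ → ℝ)
    (hh : Function.support h ⊆ unitDisk) :
    Function.support (sinogramRemainder E f h) ⊆ Icc (-1) 1 ×ˢ univ :=
  (support_taylorRemainder_subset E _ _).trans (support_mul_sinogram_subset (fun _ => 1 / 2) hh)

theorem memLp_sinogramRemainder (hE : ContDiff ℝ 2 E) (hE₂ : MemLp (deriv (deriv E)) ∞)
    (hRf : MemLp (sinogram f) 4 (volume.restrict sinoDom))
    (hRh : MemLp (sinogram h) 4 (volume.restrict sinoDom)) :
    MemLp (sinogramRemainder E f h) 2 (volume.restrict sinoDom) := by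
  have hRh' : MemLp (sinogram h) (2 * 2) (volume.restrict sinoDom) := by
    convert hRh using 1
    norm_num
  exact memLp_taylorRemainder hE hE₂ (hRf.1.const_mul (1 / 2)) (hRh'.const_mul (1 / 2))

theorem eLpNorm_sinogramRemainder_le (hE : ContDiff ℝ 2 E) (f : ℝ × ℝ → ℝ)
    (hRh : AEStronglyMeasurable (sinogram h) (volume.restrict sinoDom)) :
    eLpNorm (sinogramRemainder E f h) 2 (volume.restrict sinoDom) ≤
      ENNReal.ofReal (1 / 8) * eLpNorm (deriv (deriv E)) ∞ volume *
        eLpNorm (sinogram h) 4 (volume.restrict sinoDom) ^ 2 := by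
  have h_half : eLpNorm (fun q => 1 / 2 * sinogram h q) (2 * 2) (volume.restrict sinoDom) =
      ENNReal.ofReal (1 / 2) * eLpNorm (sinogram h) 4 (volume.restrict sinoDom) := by
    have h_four : (2 * 2 : ℝ≥0∞) = 4 := by norm_num
    rw [h_four, ← Real.enorm_of_nonneg (by norm_num : (0 : ℝ) ≤ 1 / 2)]
    exact eLpNorm_const_smul (1 / 2 : ℝ) (sinogram h) _ _
  have h_eighth : ENNReal.ofReal (1 / 8) = ENNReal.ofReal (1 / 2) * ENNReal.ofReal (1 / 2) ^ 2 := by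
    rw [← ENNReal.ofReal_pow (by norm_num), ← ENNReal.ofReal_mul (by norm_num)]
    norm_num
  calc eLpNorm (sinogramRemainder E f h) 2 (volume.restrict sinoDom)
      ≤ ENNReal.ofReal (1 / 2) * eLpNorm (deriv (deriv E)) ∞ volume *
          eLpNorm (fun q => 1 / 2 * sinogram h q) (2 * 2) (volume.restrict sinoDom) ^ 2 :=
        eLpNorm_taylorRemainder_le hE (hRh.const_mul (1 / 2)) _ _
    _ = _ := by
        rw [h_half, h_eighth]
        ring

theorem Fop_add_sub_Fop_sub_Aop_ae (hw₁ : Integrable w) (hw₂ : MemLp w 2) (hE : ContDiff ℝ 2 E)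
    (hE₂ : MemLp (deriv (deriv E)) ∞) (hRf : MemLp (sinogram f) 4 (volume.restrict sinoDom))
    (hRh : MemLp (sinogram h) 4 (volume.restrict sinoDom))
    (hf_int : Integrable f) (hh_int : Integrable h)
    (hf : Function.support f ⊆ unitDisk) (hh : Function.support h ⊆ unitDisk) :
    (fun p : ℝ × ℝ => Fop w E (f + h) p.1 p.2 - Fop w E f p.1 p.2 - Aop w (deriv E) f h p.1 p.2)
      =ᵐ[volume.restrict sinoDom] correlation volume w (sinogramRemainder E f h) := by
  have hRf' : MemLp (fun q => 1 / 2 * sinogram f q) (2 * 2) (volume.restrict sinoDom) := by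
    convert hRf.const_mul (1 / 2) using 1
    norm_num
  filter_upwards [
    ae_integrable_mul_comp_sinogram hw₁ hw₂ (memLp_comp_of_contDiff_two hE hE₂ hRf') hf,
    ae_integrable_mul_sinoDom hw₂ (memLp_mul_sinogram (memLp_deriv_comp_sinogram hE hE₂ hRf) hRh)
      (support_mul_sinogram_subset _ hh),
    ae_integrable_mul_sinoDom hw₂ (memLp_sinogramRemainder hE hE₂ hRf hRh)
      (support_sinogramRemainder_subset E f hh)] with p h_F h_A h_rem
  have h_expand : Fop w E (f + h) p.1 p.2 = ∫ r,
      (w (r - p.1) * E (1 / 2 * sinogram f (r, p.2)) +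
        1 / 2 * (w (r - p.1) *
          (deriv E (1 / 2 * sinogram f (r, p.2)) * sinogram h (r, p.2)))) +
        w (r - p.1) * sinogramRemainder E f h (r, p.2) := by
    refine integral_congr_ae ?_
    filter_upwards [radonT_add_ae hf_int hh_int p.2] with r hr
    simp only [sinogramRemainder, taylorRemainder, sinogram, hr, mul_add (1 / 2 : ℝ)]
    ring
  rw [h_expand, integral_add (h_F.fun_add (h_A.const_mul (1 / 2))) h_rem,
    integral_add h_F (h_A.const_mul (1 / 2)), integral_const_mul, Aop_eq_correlation]
  simp only [Fop, correlation, sinogram]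
  ring

theorem eLpNorm_Fop_add_sub_Fop_sub_Aop_le (hw₁ : Integrable w) (hw₂ : MemLp w 2)
    (hE : ContDiff ℝ 2 E) (hE₂ : MemLp (deriv (deriv E)) ∞)
    (hRf : MemLp (sinogram f) 4 (volume.restrict sinoDom))
    (hRh : MemLp (sinogram h) 4 (volume.restrict sinoDom))
    (hf_int : Integrable f) (hh_int : Integrable h)
    (hf : Function.support f ⊆ unitDisk) (hh : Function.support h ⊆ unitDisk) :
    eLpNorm (fun p : ℝ × ℝ =>
        Fop w E (f + h) p.1 p.2 - Fop w E f p.1 p.2 - Aop w (deriv E) f h p.1 p.2) 2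
        (volume.restrict sinoDom) ≤
      ENNReal.ofReal (1 / 4) * eLpNorm w 2 volume * eLpNorm (deriv (deriv E)) ∞ volume *
        eLpNorm (sinogram h) 4 (volume.restrict sinoDom) ^ 2 := by
  have h_quarter : ENNReal.ofReal (1 / 4) = 2 * ENNReal.ofReal (1 / 8) := by
    rw [← ENNReal.ofReal_ofNat 2, ← ENNReal.ofReal_mul (by norm_num)]
    norm_num
  rw [eLpNorm_congr_ae
    (Fop_add_sub_Fop_sub_Aop_ae hw₁ hw₂ hE hE₂ hRf hRh hf_int hh_int hf hh)]
  calc eLpNorm (correlation volume w (sinogramRemainder E f h)) 2 (volume.restrict sinoDom)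
      ≤ 2 * eLpNorm w 2 volume *
          eLpNorm (sinogramRemainder E f h) 2 (volume.restrict sinoDom) :=
        eLpNorm_correlation_sinoDom_le hw₂.1 (memLp_sinogramRemainder hE hE₂ hRf hRh)
          (support_sinogramRemainder_subset E f hh)
    _ ≤ 2 * eLpNorm w 2 volume * (ENNReal.ofReal (1 / 8) *
          eLpNorm (deriv (deriv E)) ∞ volume *
          eLpNorm (sinogram h) 4 (volume.restrict sinoDom) ^ 2) := by
        gcongr
        exact eLpNorm_sinogramRemainder_le hE f hRh.1
    _ = _ := by
        rw [h_quarter]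
        ring

end ForwardOperator

theorem F_frechet_differentiable_general (w 𝓔 : ℝ → ℝ)
    (hw1 : Integrable w) (hw2 : MemLp w 2 volume)
    (h𝓔 : ContDiff ℝ 2 𝓔)
    (h𝓔₂ : MemLp (deriv (deriv 𝓔)) ∞ volume)
    (C : ℝ)
    (hRC : ∀ h : ℝ × ℝ → ℝ, MemLp h 2 volume → Function.support h ⊆ unitDisk →
      eLpNorm (fun p : ℝ × ℝ => radonT h p.1 p.2) 4 (volume.restrict sinoDom) ≤
        ENNReal.ofReal C * eLpNorm h 2 volume) :
    ∀ f : ℝ × ℝ → ℝ, MemLp f 2 volume → Function.support f ⊆ unitDisk →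
      (∀ h : ℝ × ℝ → ℝ, MemLp h 2 volume → Function.support h ⊆ unitDisk →
        MemLp (fun p : ℝ × ℝ => Aop w (deriv 𝓔) f h p.1 p.2) 2 (volume.restrict sinoDom)) ∧
      (∀ h₁ h₂ : ℝ × ℝ → ℝ, MemLp h₁ 2 volume → Function.support h₁ ⊆ unitDisk →
        MemLp h₂ 2 volume → Function.support h₂ ⊆ unitDisk →
        ∀ᵐ p : ℝ × ℝ ∂(volume.restrict sinoDom),
          Aop w (deriv 𝓔) f (h₁ + h₂) p.1 p.2 =
            Aop w (deriv 𝓔) f h₁ p.1 p.2 + Aop w (deriv 𝓔) f h₂ p.1 p.2) ∧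
      (∀ (c : ℝ) (h : ℝ × ℝ → ℝ), MemLp h 2 volume → Function.support h ⊆ unitDisk →
        ∀ᵐ p : ℝ × ℝ ∂(volume.restrict sinoDom),
          Aop w (deriv 𝓔) f (c • h) p.1 p.2 = c * Aop w (deriv 𝓔) f h p.1 p.2) ∧
      (∃ C' : ℝ, 0 ≤ C' ∧
        ∀ h : ℝ × ℝ → ℝ, MemLp h 2 volume → Function.support h ⊆ unitDisk →
          eLpNorm (fun p : ℝ × ℝ => Aop w (deriv 𝓔) f h p.1 p.2) 2
              (volume.restrict sinoDom) ≤
            ENNReal.ofReal C' * eLpNorm h 2 volume) ∧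
      (∀ h : ℝ × ℝ → ℝ, MemLp h 2 volume → Function.support h ⊆ unitDisk →
        eLpNorm
            (fun p : ℝ × ℝ =>
              Fop w 𝓔 (f + h) p.1 p.2 - Fop w 𝓔 f p.1 p.2 -
                Aop w (deriv 𝓔) f h p.1 p.2) 2 (volume.restrict sinoDom) ≤
          ENNReal.ofReal (1 / 4) * eLpNorm w 2 volume *
            eLpNorm (deriv (deriv 𝓔)) ∞ volume * ENNReal.ofReal C ^ 2 *
            eLpNorm h 2 volume ^ 2) := by
  intro f hf hfD
  have hR {h : ℝ × ℝ → ℝ} (hh : MemLp h 2) (hhD : Function.support h ⊆ unitDisk) :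
      MemLp (sinogram h) 4 (volume.restrict sinoDom) :=
    memLp_sinogram_of_eLpNorm_le hh (hRC h hh hhD)
  have h_weight := memLp_deriv_comp_sinogram h𝓔 h𝓔₂ (hR hf hfD)
  refine ⟨?memLp, ?add, ?smul, ?bounded, ?remainder⟩
  case memLp => exact fun h hh hhD => memLp_Aop hw2 h_weight (hR hh hhD) hhD
  case add =>
    exact fun h₁ h₂ hh₁ hh₁D hh₂ hh₂D => Aop_add_ae hw2 h_weight (hR hh₁ hh₁D) (hR hh₂ hh₂D)
      (integrable_of_support_subset_unitDisk hh₁ hh₁D)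
      (integrable_of_support_subset_unitDisk hh₂ hh₂D) hh₁D hh₂D
  case smul => exact fun c h _ _ => .of_forall fun p => Aop_const_smul w (deriv 𝓔) f c h p.1 p.2
  case bounded =>
    have h_finite := ENNReal.mul_lt_top (ENNReal.mul_lt_top hw2.2 h_weight.2)
      (ENNReal.ofReal_lt_top (r := C))
    refine ⟨(eLpNorm w 2 volume *
      eLpNorm (fun q => deriv 𝓔 (1 / 2 * sinogram f q)) 4 (volume.restrict sinoDom) *
      ENNReal.ofReal C).toReal, ENNReal.toReal_nonneg, fun h hh hhD => ?_⟩
    rw [ENNReal.ofReal_toReal h_finite.ne, mul_assoc _ (ENNReal.ofReal C)]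
    refine (eLpNorm_Aop_le hw2.1 h_weight (hR hh hhD) hhD).trans ?_
    gcongr
    exact hRC h hh hhD
  case remainder =>
    intro h hh hhD
    refine (eLpNorm_Fop_add_sub_Fop_sub_Aop_le hw1 hw2 h𝓔 h𝓔₂ (hR hf hfD) (hR hh hhD)
      (integrable_of_support_subset_unitDisk hf hfD)
      (integrable_of_support_subset_unitDisk hh hhD) hfD hhD).trans ?_
    rw [mul_assoc _ (ENNReal.ofReal C ^ 2), ← mul_pow]
    gcongr
    exact hRC h hh hhD

/-- Let `w ∈ L¹(ℝ) ∩ L²(ℝ)` and let `𝓔` be twice continuously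
differentiable with `𝓔, 𝓔', 𝓔''` bounded. Assume there is `C > 0` with
`‖Rh‖_{L⁴(Ω_S)} ≤ C·‖h‖_{L²(Ω_D)}` for all `h ∈ L²(Ω_D)`. Then `F` is Fréchet
differentiable at every `f ∈ L²(Ω_D)` with derivative the bounded linear operator
`(F'(f)h)(s,θ) = ½ ∫_ℝ w(r−s)·𝓔'(½(Rf)(r,θ))·(Rh)(r,θ) dr`, expressed here by:
`A(f)h ∈ L²(Ω_S)` for all `h`, `h ↦ A(f)h` is linear (a.e. on `Ω_S`) and bounded,
and the first-order Taylor remainder obeys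
`‖F(f+h) − F(f) − A(f)h‖_{L²(Ω_S)} ≤ ¼·‖w‖_{L²}·‖𝓔''‖_{L^∞}·C²·‖h‖²_{L²(Ω_D)}`. -/
theorem F_frechet_differentiable (w 𝓔 : ℝ → ℝ)
    (hw1 : Integrable w) (hw2 : MemLp w 2 volume)
    (h𝓔 : ContDiff ℝ 2 𝓔)
    (h𝓔b : ∃ M : ℝ, ∀ x : ℝ, |𝓔 x| ≤ M ∧ |deriv 𝓔 x| ≤ M ∧ |deriv (deriv 𝓔) x| ≤ M)
    (C : ℝ) (hC : 0 < C)
    (hRC : ∀ h : ℝ × ℝ → ℝ, MemLp h 2 volume → Function.support h ⊆ unitDisk →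
      eLpNorm (fun p : ℝ × ℝ => radonT h p.1 p.2) 4 (volume.restrict sinoDom) ≤
        ENNReal.ofReal C * eLpNorm h 2 volume) :
    ∀ f : ℝ × ℝ → ℝ, MemLp f 2 volume → Function.support f ⊆ unitDisk →
      -- `A(f)` maps `L²(Ω_D)` into `L²(Ω_S)` ...
      (∀ h : ℝ × ℝ → ℝ, MemLp h 2 volume → Function.support h ⊆ unitDisk →
        MemLp (fun p : ℝ × ℝ => Aop w (deriv 𝓔) f h p.1 p.2) 2 (volume.restrict sinoDom)) ∧
      -- ... is linear in `h` (a.e. on `Ω_S`) ...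
      (∀ h₁ h₂ : ℝ × ℝ → ℝ, MemLp h₁ 2 volume → Function.support h₁ ⊆ unitDisk →
        MemLp h₂ 2 volume → Function.support h₂ ⊆ unitDisk →
        ∀ᵐ p : ℝ × ℝ ∂(volume.restrict sinoDom),
          Aop w (deriv 𝓔) f (h₁ + h₂) p.1 p.2 =
            Aop w (deriv 𝓔) f h₁ p.1 p.2 + Aop w (deriv 𝓔) f h₂ p.1 p.2) ∧
      (∀ (c : ℝ) (h : ℝ × ℝ → ℝ), MemLp h 2 volume → Function.support h ⊆ unitDisk →
        ∀ᵐ p : ℝ × ℝ ∂(volume.restrict sinoDom),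
          Aop w (deriv 𝓔) f (c • h) p.1 p.2 = c * Aop w (deriv 𝓔) f h p.1 p.2) ∧
      -- ... and is bounded ...
      (∃ C' : ℝ, 0 ≤ C' ∧
        ∀ h : ℝ × ℝ → ℝ, MemLp h 2 volume → Function.support h ⊆ unitDisk →
          eLpNorm (fun p : ℝ × ℝ => Aop w (deriv 𝓔) f h p.1 p.2) 2
              (volume.restrict sinoDom) ≤
            ENNReal.ofReal C' * eLpNorm h 2 volume) ∧
      -- ... with quadratic first-order Taylor remainder (Fréchet differentiability):
      (∀ h : ℝ × ℝ → ℝ, MemLp h 2 volume → Function.support h ⊆ unitDisk →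
        eLpNorm
            (fun p : ℝ × ℝ =>
              Fop w 𝓔 (f + h) p.1 p.2 - Fop w 𝓔 f p.1 p.2 -
                Aop w (deriv 𝓔) f h p.1 p.2) 2 (volume.restrict sinoDom) ≤
          ENNReal.ofReal (1 / 4) * eLpNorm w 2 volume *
            eLpNorm (deriv (deriv 𝓔)) ⊤ volume * ENNReal.ofReal C ^ 2 *
            eLpNorm h 2 volume ^ 2) := by
  obtain ⟨M, hM⟩ := h𝓔b
  exact F_frechet_differentiable_general w 𝓔 hw1 hw2 h𝓔 (memLp_top_of_bound
    (measurable_deriv _).aestronglyMeasurable M (.of_forall fun x => (hM x).2.2)) C hRC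
end

section
/- Let w ∈ L¹(ℝ) ∩ L²(ℝ) and let 𝓔′ : ℝ → ℝ be bounded and measurable. For f ∈ L²(Ω_D) define (A(f)h)(s,θ) := ½·∫_ℝ w(r−s)·𝓔′(½·(Rf)(r,θ))·(Rh)(r,θ) dr for h ∈ L²(Ω_D), and (B(f)g)(s,θ) := ½·𝓔′(½·(Rf)(s,θ))·∫_{−1}^{1} w(s−r)·g(r,θ) dr for g ∈ L²(Ω_S). Then for all h ∈ L²(Ω_D) and g ∈ L²(Ω_S): ⟨A(f)h, g⟩_{L²(Ω_S)} = ⟨Rh, B(f)g⟩_{L²(Ω_S)}; that is, the adjoint of the derivative operator A(f) factors as A(f)* = R* ∘ B(f). -/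
open MeasureTheory Real Set

/-- The operator `(B(f)g)(s,θ) = ½ · 𝓔'(½ (Rf)(s,θ)) · ∫_{-1}^{1} w(s-r)·g(r,θ) dr`. -/
noncomputable def Bop (w E' : ℝ → ℝ) (f : ℝ × ℝ → ℝ) (g : ℝ × ℝ → ℝ) (s θ : ℝ) : ℝ :=
  (1 / 2) * E' ((1 / 2) * radonT f s θ) * ∫ r in (-1 : ℝ)..1, w (s - r) * g (r, θ)

/-!
`F(f)` is, in the radial variable, the correlation of `w` with the sinogram `𝓔(½ Rf)`, so `A(f)h` is
the correlation of `w` with `k = ½ 𝓔'(½ Rf) Rh`. The adjoint identity is Fubini's theorem for the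
kernel `w (r - s) * k (r, θ) * g (s, θ)`, which is integrable because `w ∈ L¹` and `k, g ∈ L²`.
That `k ∈ L²` reduces to the boundedness of `R : L²(Ω_D) → L²`: a line meets the disk in a segment
of length at most `2`, so Hölder's inequality applies on lines, and for each `θ` rotation invariance
turns the double integral over lines into the integral over the plane.
-/

open scoped ENNReal

section TripleIntegral

variable {α β γ E : Type*} [MeasurableSpace α] [MeasurableSpace β] [MeasurableSpace γ]
  [NormedAddCommGroup E] {μ : Measure α} {ν : Measure β} {ρ : Measure γ}

/-- The reversal `((a, b), c) ↦ ((c, b), a)` of the order of a triple; both sides associate to the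
left so that an iterated integral over a triple starts with the outermost variable. -/
def prodReverse (α β γ : Type*) [MeasurableSpace α] [MeasurableSpace β] [MeasurableSpace γ] :
    (α × β) × γ ≃ᵐ (γ × β) × α :=
  MeasurableEquiv.prodAssoc.trans <| MeasurableEquiv.prodComm.trans <|
    MeasurableEquiv.prodComm.prodCongr (MeasurableEquiv.refl α)

theorem measurePreserving_prodReverse [SFinite μ] [SFinite ν] [SFinite ρ] :
    MeasurePreserving (prodReverse α β γ) ((μ.prod ν).prod ρ) ((ρ.prod ν).prod μ) :=
  (Measure.measurePreserving_swap.prod (MeasurePreserving.id μ)).comp <|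
    Measure.measurePreserving_swap.comp <| measurePreserving_prodAssoc μ ν ρ

variable [NormedSpace ℝ E]

theorem integral_prod_prod [SFinite μ] [SFinite ν] [SFinite ρ] {T : (α × β) × γ → E}
    (hT : Integrable T ((μ.prod ν).prod ρ)) :
    ∫ q, T q ∂(μ.prod ν).prod ρ = ∫ a, ∫ b, ∫ c, T ((a, b), c) ∂ρ ∂ν ∂μ := by
  rw [integral_prod T hT, integral_prod _ hT.integral_prod_left]

theorem integral_integral_integral_reverse [SFinite μ] [SFinite ν] [SFinite ρ]
    {T : (α × β) × γ → E} (hT : Integrable T ((μ.prod ν).prod ρ)) :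
    ∫ a, ∫ b, ∫ c, T ((a, b), c) ∂ρ ∂ν ∂μ = ∫ c, ∫ b, ∫ a, T ((a, b), c) ∂μ ∂ν ∂ρ := by
  have hrev : MeasurePreserving (prodReverse γ β α) ((ρ.prod ν).prod μ) ((μ.prod ν).prod ρ) :=
    measurePreserving_prodReverse
  rw [← integral_prod_prod hT, ← hrev.integral_comp']
  exact integral_prod_prod (hrev.integrable_comp_of_integrable hT)

end TripleIntegral

theorem memLp_integral_prod {α β E : Type*} [MeasurableSpace α] [MeasurableSpace β]
    [NormedAddCommGroup E] [NormedSpace ℝ E] {μ : Measure α} {ν : Measure β}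
    [IsFiniteMeasure ν] {p : ℝ≥0∞} (hp : 1 ≤ p) (hp_top : p ≠ ∞) {F : α × β → E}
    (hF : MemLp F p (μ.prod ν)) : MemLp (fun x => ∫ y, F (x, y) ∂ν) p μ := by
  have hp_zero : p ≠ 0 := (zero_lt_one.trans_le hp).ne'
  refine ⟨hF.1.integral_prod_right', ?_⟩
  rw [eLpNorm_lt_top_iff_lintegral_rpow_enorm_lt_top hp_zero hp_top]
  set C : ℝ≥0∞ := ν univ ^ (1 - 1 / p.toReal) with hC_def
  have hC : C ^ p.toReal ≠ ∞ := by
    have : 1 ≤ p.toReal := by simpa using ENNReal.toReal_mono hp_top hp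
    have : 0 ≤ 1 - 1 / p.toReal := sub_nonneg.2 ((div_le_one (by positivity)).2 this)
    finiteness
  have holder : ∀ᵐ x ∂μ, ‖∫ y, F (x, y) ∂ν‖ₑ ^ p.toReal ≤
      (∫⁻ y, ‖F (x, y)‖ₑ ^ p.toReal ∂ν) * C ^ p.toReal := by
    filter_upwards [hF.1.prodMk_left] with x hx
    calc ‖∫ y, F (x, y) ∂ν‖ₑ ^ p.toReal
        ≤ (eLpNorm (fun y => F (x, y)) 1 ν) ^ p.toReal := by
          rw [eLpNorm_one_eq_lintegral_enorm]
          gcongr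
          exact enorm_integral_le_lintegral_enorm _
      _ ≤ (eLpNorm (fun y => F (x, y)) p ν * C) ^ p.toReal := by
          gcongr
          simpa [hC_def] using eLpNorm_le_eLpNorm_mul_rpow_measure_univ hp hx
      _ = (∫⁻ y, ‖F (x, y)‖ₑ ^ p.toReal ∂ν) * C ^ p.toReal := by
          have hp_pos : 0 < p.toReal := ENNReal.toReal_pos hp_zero hp_top
          rw [ENNReal.mul_rpow_of_nonneg _ _ hp_pos.le, eLpNorm_eq_eLpNorm' hp_zero hp_top,
            lintegral_rpow_enorm_eq_rpow_eLpNorm' hp_pos]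
  calc ∫⁻ x, ‖∫ y, F (x, y) ∂ν‖ₑ ^ p.toReal ∂μ
      ≤ ∫⁻ x, (∫⁻ y, ‖F (x, y)‖ₑ ^ p.toReal ∂ν) * C ^ p.toReal ∂μ := lintegral_mono_ae holder
    _ = (∫⁻ z, ‖F z‖ₑ ^ p.toReal ∂μ.prod ν) * C ^ p.toReal := by
        rw [lintegral_mul_const' _ _ hC, lintegral_prod _ (hF.1.enorm.pow_const _)]
    _ < ∞ := ENNReal.mul_lt_top
        (lintegral_rpow_enorm_lt_top_of_eLpNorm_lt_top hp_zero hp_top hF.2) hC.lt_top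

section Correlation

variable {X G : Type*} [MeasurableSpace X] [MeasurableSpace G] [AddGroup G] [MeasurableAdd₂ G]
  [MeasurableNeg G] {μ : Measure G} [SFinite μ] {ν : Measure X} [SFinite ν]

theorem measurePreserving_prod_sub_right [μ.IsAddRightInvariant] {x₀ : X → G}
    (hx₀ : Measurable x₀) :
    MeasurePreserving (fun q : X × G => (q.1, q.2 - x₀ q.1)) (ν.prod μ) (ν.prod μ) :=
  (MeasurePreserving.id ν).skew_product (g := fun x r => r - x₀ x)
    (measurable_snd.sub (hx₀.comp measurable_fst))
    (.of_forall fun x => (measurePreserving_sub_right μ (x₀ x)).map_eq)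

theorem measurePreserving_prod_sub_left [μ.IsAddLeftInvariant] [μ.IsNegInvariant] {x₀ : X → G}
    (hx₀ : Measurable x₀) :
    MeasurePreserving (fun q : X × G => (q.1, x₀ q.1 - q.2)) (ν.prod μ) (ν.prod μ) :=
  (MeasurePreserving.id ν).skew_product (g := fun x r => x₀ x - r)
    ((hx₀.comp measurable_fst).sub measurable_snd)
    (.of_forall fun x => (Measure.measurePreserving_sub_left μ (x₀ x)).map_eq)

variable [μ.IsAddLeftInvariant] [μ.IsAddRightInvariant] [μ.IsNegInvariant] {ρ : Measure G}
  [SFinite ρ] {𝕜 : Type*} [RCLike 𝕜] {w : G → 𝕜} {k g : G × X → 𝕜}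

theorem integrable_correlation_kernel (hw : Integrable w μ) (hk : MemLp k 2 (μ.prod ν))
    (hρ : ρ ≤ μ) (hg : MemLp g 2 (ρ.prod ν)) :
    Integrable (fun q : (G × X) × G => w (q.2 - q.1.1) * k (q.2, q.1.2) * g q.1)
      ((ρ.prod ν).prod μ) := by
  have hρμ : (ρ.prod ν).prod μ ≤ (μ.prod ν).prod μ := by gcongr
  have shear_g := measurePreserving_prod_sub_right (μ := μ) (ν := ρ.prod ν)
    (measurable_fst (α := G) (β := X))
  have shear_k := measurePreserving_prod_sub_left (μ := μ) (ν := μ.prod ν)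
    (measurable_fst (α := G) (β := X))
  have rev : MeasurePreserving (prodReverse G X G) ((μ.prod ν).prod μ) ((μ.prod ν).prod μ) :=
    measurePreserving_prodReverse
  have w_meas : AEStronglyMeasurable (fun q : (G × X) × G => w (q.2 - q.1.1))
      ((ρ.prod ν).prod μ) :=
    hw.1.comp_snd.comp_measurePreserving shear_g
  have k_meas : AEStronglyMeasurable (fun q : (G × X) × G => k (q.2, q.1.2))
      ((ρ.prod ν).prod μ) :=
    (hk.1.comp_fst.comp_measurePreserving rev).mono_measure hρμ
  have g_bound : Integrable (fun q : (G × X) × G => ‖g q.1‖ ^ 2 * ‖w (q.2 - q.1.1)‖)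
      ((ρ.prod ν).prod μ) :=
    shear_g.integrable_comp_of_integrable
      ((hg.integrable_norm_pow two_ne_zero).mul_prod hw.norm)
  have k_bound : Integrable (fun q : (G × X) × G => ‖k (q.2, q.1.2)‖ ^ 2 * ‖w (q.2 - q.1.1)‖)
      ((ρ.prod ν).prod μ) :=
    (rev.integrable_comp_of_integrable (shear_k.integrable_comp_of_integrable
      ((hk.integrable_norm_pow two_ne_zero).mul_prod hw.norm))).mono_measure hρμ
  refine (k_bound.add g_bound).mono' ((w_meas.mul k_meas).mul hg.1.comp_fst)
    (.of_forall fun q => ?_)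
  set K := ‖k (q.2, q.1.2)‖
  set W := ‖w (q.2 - q.1.1)‖
  calc ‖w (q.2 - q.1.1) * k (q.2, q.1.2) * g q.1‖ = K * ‖g q.1‖ * W := by
        rw [norm_mul, norm_mul]; ring
    _ ≤ (K ^ 2 + ‖g q.1‖ ^ 2) * W := by
        gcongr
        nlinarith [sq_nonneg K, sq_nonneg ‖g q.1‖, two_mul_le_add_sq K ‖g q.1‖]
    _ = K ^ 2 * W + ‖g q.1‖ ^ 2 * W := add_mul _ _ _

theorem integral_correlation_mul (hw : Integrable w μ) (hk : MemLp k 2 (μ.prod ν))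
    (hρ : ρ ≤ μ) (hg : MemLp g 2 (ρ.prod ν)) :
    ∫ s, ∫ x, (∫ r, w (r - s) * k (r, x) ∂μ) * g (s, x) ∂ν ∂ρ =
      ∫ r, ∫ x, k (r, x) * ∫ s, w (r - s) * g (s, x) ∂ρ ∂ν ∂μ := by
  simp only [← integral_mul_const, ← integral_const_mul]
  rw [integral_integral_integral_reverse (integrable_correlation_kernel hw hk hρ hg)]
  simp only [mul_left_comm (k _), mul_assoc]

end Correlation

section Radon

/-- Rotation of the plane by `θ`; the line integrated over in `radonT f s θ` is the image of
`{s} × ℝ` under it. -/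
noncomputable def planeRotation (θ : ℝ) (p : ℝ × ℝ) : ℝ × ℝ :=
  (p.1 * Real.cos θ - p.2 * Real.sin θ, p.1 * Real.sin θ + p.2 * Real.cos θ)

theorem radonT_eq_integral_planeRotation (f : ℝ × ℝ → ℝ) (s θ : ℝ) :
    radonT f s θ = ∫ σ, f (planeRotation θ (s, σ)) := rfl

theorem measurePreserving_planeRotation (θ : ℝ) : MeasurePreserving (planeRotation θ) := by
  set L := Matrix.toLin (Module.Basis.finTwoProd ℝ) (Module.Basis.finTwoProd ℝ)
    !![Real.cos θ, -Real.sin θ; Real.sin θ, Real.cos θ] with hL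
  have coe_L : ⇑L = planeRotation θ := by
    funext p
    rw [hL, Matrix.toLin_finTwoProd_apply, planeRotation]
    ext <;> ring
  have det_L : LinearMap.det L = 1 := by
    rw [hL, LinearMap.det_toLin, Matrix.det_fin_two_of]
    linear_combination Real.sin_sq_add_cos_sq θ
  refine ⟨by unfold planeRotation; fun_prop, ?_⟩
  simpa [det_L, coe_L] using
    Measure.map_linearMap_addHaar_eq_smul_addHaar (f := L) volume (by simp [det_L])

theorem planeRotation_mem_unitDisk_iff {θ : ℝ} {p : ℝ × ℝ} :
    planeRotation θ p ∈ unitDisk ↔ p ∈ unitDisk := by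
  have norm_sq : (planeRotation θ p).1 ^ 2 + (planeRotation θ p).2 ^ 2 = p.1 ^ 2 + p.2 ^ 2 := by
    simp only [planeRotation]
    linear_combination (p.1 ^ 2 + p.2 ^ 2) * Real.sin_sq_add_cos_sq θ
  change _ ≤ (1 : ℝ) ↔ _ ≤ (1 : ℝ)
  rw [norm_sq]

theorem unitDisk_subset_Icc_prod_Icc : unitDisk ⊆ Icc (-1 : ℝ) 1 ×ˢ Icc (-1 : ℝ) 1 := by
  intro p (hp : p.1 ^ 2 + p.2 ^ 2 ≤ 1)
  exact ⟨abs_le.1 ((sq_le_one_iff_abs_le_one _).1 (by linarith [sq_nonneg p.2])),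
    abs_le.1 ((sq_le_one_iff_abs_le_one _).1 (by linarith [sq_nonneg p.1]))⟩

variable {f : ℝ × ℝ → ℝ} {s θ σ : ℝ}

theorem apply_planeRotation_eq_zero (hf : Function.support f ⊆ unitDisk)
    (h : s ∉ Icc (-1 : ℝ) 1 ∨ σ ∉ Icc (-1 : ℝ) 1) : f (planeRotation θ (s, σ)) = 0 := by
  by_contra hne
  have hmem := unitDisk_subset_Icc_prod_Icc (planeRotation_mem_unitDisk_iff.1 (hf hne))
  exact h.elim (fun hs => hs hmem.1) (fun hσ => hσ hmem.2)

theorem radonT_eq_zero (hf : Function.support f ⊆ unitDisk) (hs : s ∉ Icc (-1 : ℝ) 1) :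
    radonT f s θ = 0 := by
  simp only [radonT_eq_integral_planeRotation, apply_planeRotation_eq_zero hf (.inl hs),
    integral_zero]

theorem radonT_eq_setIntegral (hf : Function.support f ⊆ unitDisk) :
    radonT f s θ = ∫ σ in Icc (-1 : ℝ) 1, f (planeRotation θ (s, σ)) :=
  (setIntegral_eq_integral_of_forall_compl_eq_zero
    fun _ hσ => apply_planeRotation_eq_zero hf (.inr hσ)).symm

theorem measurePreserving_prod_planeRotation {ν : Measure ℝ} [SFinite ν] :
    MeasurePreserving (fun q : (ℝ × ℝ) × ℝ => (q.1.2, planeRotation q.1.2 (q.1.1, q.2)))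
      ((volume.prod ν).prod volume) (ν.prod volume) := by
  have swap : MeasurePreserving (Prod.map Prod.swap id : (ℝ × ℝ) × ℝ → (ℝ × ℝ) × ℝ)
      ((volume.prod ν).prod volume) ((ν.prod volume).prod volume) :=
    Measure.measurePreserving_swap.prod (.id volume)
  have skew : MeasurePreserving (fun z : ℝ × (ℝ × ℝ) => (z.1, planeRotation z.1 z.2))
      (ν.prod volume) (ν.prod volume) :=
    (MeasurePreserving.id ν).skew_product (by unfold Function.uncurry planeRotation; fun_prop)
      (.of_forall fun θ => (measurePreserving_planeRotation θ).map_eq)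
  exact skew.comp ((measurePreserving_prodAssoc ν volume volume).comp swap)

theorem aestronglyMeasurable_radonT {ν : Measure ℝ} [SFinite ν] (hf : AEStronglyMeasurable f) :
    AEStronglyMeasurable (fun p : ℝ × ℝ => radonT f p.1 p.2) (volume.prod ν) :=
  (hf.comp_snd.comp_measurePreserving measurePreserving_prod_planeRotation).integral_prod_right'

theorem memLp_radonT {ν : Measure ℝ} [IsFiniteMeasure ν] {p : ℝ≥0∞} (hp : 1 ≤ p)
    (hp_top : p ≠ ∞) (hf : MemLp f p) (hf_supp : Function.support f ⊆ unitDisk) :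
    MemLp (fun q : ℝ × ℝ => radonT f q.1 q.2) p (volume.prod ν) := by
  simp only [radonT_eq_setIntegral hf_supp]
  have on_lines : MemLp (fun q : (ℝ × ℝ) × ℝ => f (planeRotation q.1.2 (q.1.1, q.2))) p
      ((volume.prod ν).prod volume) :=
    (hf.comp_snd ν).comp_measurePreserving measurePreserving_prod_planeRotation
  exact memLp_integral_prod hp hp_top <|
    on_lines.mono_measure (Measure.prod_mono le_rfl Measure.restrict_le_self)

end Radon

section DerivativeOperator

variable {w 𝓔' : ℝ → ℝ} {f h g : ℝ × ℝ → ℝ}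

/-- The derivative at `f` in the direction `h` of the sinogram `𝓔(½ Rf)`, with `𝓔'` in the role of
the derivative of `𝓔`. It is a function of the pair `(s, θ)`, and `A(f)h` is its correlation with
`w` in the variable `s`. -/
noncomputable def sinogramDeriv (𝓔' : ℝ → ℝ) (f h : ℝ × ℝ → ℝ) (p : ℝ × ℝ) : ℝ :=
  (1 / 2) * 𝓔' ((1 / 2) * radonT f p.1 p.2) * radonT h p.1 p.2

theorem Aop_eq_integral_sinogramDeriv (s θ : ℝ) :
    Aop w 𝓔' f h s θ = ∫ r, w (r - s) * sinogramDeriv 𝓔' f h (r, θ) := by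
  rw [Aop, ← integral_const_mul]
  congr 1 with r
  rw [sinogramDeriv]
  ring

theorem radonT_mul_Bop (s θ : ℝ) :
    radonT h s θ * Bop w 𝓔' f g s θ =
      sinogramDeriv 𝓔' f h (s, θ) * ∫ r in (-1 : ℝ)..1, w (s - r) * g (r, θ) := by
  rw [Bop, sinogramDeriv]
  ring

theorem sinogramDeriv_eq_zero (hh : Function.support h ⊆ unitDisk) {s θ : ℝ}
    (hs : s ∉ Icc (-1 : ℝ) 1) : sinogramDeriv 𝓔' f h (s, θ) = 0 := by
  rw [sinogramDeriv, radonT_eq_zero hh hs, mul_zero]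

theorem memLp_sinogramDeriv {ν : Measure ℝ} [IsFiniteMeasure ν] {p : ℝ≥0∞} (hp : 1 ≤ p)
    (hp_top : p ≠ ∞) (h𝓔'm : Measurable 𝓔') (h𝓔'b : ∃ M : ℝ, ∀ x : ℝ, |𝓔' x| ≤ M)
    (hf : AEStronglyMeasurable f) (hh : MemLp h p) (hh_supp : Function.support h ⊆ unitDisk) :
    MemLp (sinogramDeriv 𝓔' f h) p (volume.prod ν) := by
  obtain ⟨M, hM⟩ := h𝓔'b
  have Rf_meas : AEStronglyMeasurable (fun q : ℝ × ℝ => radonT f q.1 q.2) (volume.prod ν) :=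
    aestronglyMeasurable_radonT hf
  have Rh_memLp := memLp_radonT (ν := ν) hp hp_top hh hh_supp
  have weight_meas : AEStronglyMeasurable
      (fun q : ℝ × ℝ => (1 / 2) * 𝓔' ((1 / 2) * radonT f q.1 q.2)) (volume.prod ν) :=
    ((h𝓔'm.comp_aemeasurable
      (Rf_meas.aemeasurable.const_mul (1 / 2))).const_mul (1 / 2)).aestronglyMeasurable
  refine Rh_memLp.of_le_mul (c := 1 / 2 * M) (weight_meas.mul Rh_memLp.1) (.of_forall fun q => ?_)
  rw [sinogramDeriv, norm_mul, norm_mul, Real.norm_of_nonneg one_half_pos.le, Real.norm_eq_abs]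
  gcongr
  exact hM _

theorem volume_restrict_sinoDom :
    (volume : Measure (ℝ × ℝ)).restrict sinoDom =
      (volume.restrict (Ioc (-1) 1)).prod (volume.restrict (Ioc 0 (2 * π))) := by
  rw [restrict_Ioc_eq_restrict_Icc (a := (-1 : ℝ)), ← restrict_Ico_eq_restrict_Ioc,
    Measure.prod_restrict]
  rfl

end DerivativeOperator

/-- On a line along which `f` is not integrable, `𝓔' (½ Rf)` takes the junk value `𝓔' 0`. -/
theorem Aop_adjoint_factorization_general (w 𝓔' : ℝ → ℝ) (hw : Integrable w)
    (h𝓔'm : Measurable 𝓔') (h𝓔'b : ∃ M : ℝ, ∀ x : ℝ, |𝓔' x| ≤ M) (f h : ℝ × ℝ → ℝ)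
    (hf : AEStronglyMeasurable f) (hh : MemLp h 2) (hhsupp : Function.support h ⊆ unitDisk)
    (g : ℝ × ℝ → ℝ) (hg : MemLp g 2 (volume.restrict sinoDom)) :
    ∫ s in (-1 : ℝ)..1, ∫ θ in (0 : ℝ)..(2 * π), Aop w 𝓔' f h s θ * g (s, θ) =
      ∫ s in (-1 : ℝ)..1, ∫ θ in (0 : ℝ)..(2 * π), radonT h s θ * Bop w 𝓔' f g s θ := by
  have hk : MemLp (sinogramDeriv 𝓔' f h) 2 (volume.prod (volume.restrict (Ioc 0 (2 * π)))) :=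
    memLp_sinogramDeriv one_le_two ENNReal.ofNat_ne_top h𝓔'm h𝓔'b hf hh hhsupp
  rw [volume_restrict_sinoDom] at hg
  simp only [Aop_eq_integral_sinogramDeriv, radonT_mul_Bop,
    intervalIntegral.integral_of_le two_pi_pos.le,
    intervalIntegral.integral_of_le (neg_le_self (zero_le_one' ℝ))]
  rw [integral_correlation_mul hw hk Measure.restrict_le_self hg, ← integral_Icc_eq_integral_Ioc,
    setIntegral_eq_integral_of_forall_compl_eq_zero]
  intro s hs
  simp only [sinogramDeriv_eq_zero hhsupp hs, zero_mul, integral_zero]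

/-- For `w ∈ L¹(ℝ) ∩ L²(ℝ)`, bounded measurable `𝓔'`,
`f, h ∈ L²(Ω_D)` and `g ∈ L²(Ω_S)`, the adjoint identity
`⟨A(f)h, g⟩_{L²(Ω_S)} = ⟨Rh, B(f)g⟩_{L²(Ω_S)}` holds (with
`⟨u,v⟩ = ∫_{-1}^{1} ∫_0^{2π} u(s,θ)·v(s,θ) dθ ds`); that is, the adjoint of the
derivative operator `A(f)` factors as `A(f)* = R* ∘ B(f)`. -/
theorem Aop_adjoint_factorization (w 𝓔' : ℝ → ℝ)
    (hw1 : Integrable w) (hw2 : MemLp w 2 volume)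
    (h𝓔'm : Measurable 𝓔') (h𝓔'b : ∃ M : ℝ, ∀ x : ℝ, |𝓔' x| ≤ M)
    (f h : ℝ × ℝ → ℝ)
    (hf : MemLp f 2 volume) (hfsupp : Function.support f ⊆ unitDisk)
    (hh : MemLp h 2 volume) (hhsupp : Function.support h ⊆ unitDisk)
    (g : ℝ × ℝ → ℝ) (hg : MemLp g 2 (volume.restrict sinoDom)) :
    ∫ s in (-1 : ℝ)..1, ∫ θ in (0 : ℝ)..(2 * π), Aop w 𝓔' f h s θ * g (s, θ) =
      ∫ s in (-1 : ℝ)..1, ∫ θ in (0 : ℝ)..(2 * π), radonT h s θ * Bop w 𝓔' f g s θ := by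
  exact Aop_adjoint_factorization_general w 𝓔' hw1 h𝓔'm h𝓔'b f h hf.1 hh hhsupp g hg
end
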